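/- arXiv:2509.04879 — 2 statements merged into one kernel-verified Lean document; each statement's English description precedes it below -/
import Mathlib

section
/- Let S : ℓ²(ℕ, ℂ) → ℓ²(ℕ, ℂ) be the right shift operator, defined by (S x)(0) = 0 and (S x)(k+1) = x(k) for all k ∈ ℕ. For every integer m ≥ 2 and every f ∈ ℓ²(ℕ, ℂ), the closed linear span of the orbit {S^{m n} f : n ∈ ℕ} is a proper closed subspace of ℓ²(ℕ, ℂ); that is, f is not a cyclic vector for S^m. -/
/-!
A continuous linear map that annihilates the range of `T` sends the whole `T`-orbit of `f`, apart
from `f` itself, to zero. If `f` is cyclic for `T`, such a map into a finite-dimensional space is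
therefore determined by one vector, and so it has rank at most one. The first `m` coordinates
vanish on the range of the `m`-th power of the right shift and form a map of rank `m`, so for
`m ≥ 2` no vector is cyclic.
-/

open scoped ENNReal

section CyclicVector

variable {𝕜 V : Type*} [TopologicalSpace V] [AddCommMonoid V]

/-- A vector `f` is cyclic for `T` when the linear span of the orbit `f, T f, T² f, …` is dense;
density is expressed by the closure being the whole space. -/
def IsCyclicVector [Semiring 𝕜] [Module 𝕜 V] [ContinuousAdd V] [ContinuousConstSMul 𝕜 V]
    (T : V →L[𝕜] V) (f : V) : Prop :=
  (Submodule.span 𝕜 (Set.range fun n : ℕ => (T ^ n) f)).topologicalClosure = ⊤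

theorem IsCyclicVector.eq_zero_of_comp_eq_zero [Semiring 𝕜] [Module 𝕜 V] [ContinuousAdd V]
    [ContinuousConstSMul 𝕜 V] {W : Type*} [TopologicalSpace W] [T1Space W] [AddCommMonoid W]
    [Module 𝕜 W] {T : V →L[𝕜] V} {f : V} (hf : IsCyclicVector T f) {φ : V →L[𝕜] W}
    (hφT : φ ∘L T = 0) (hφf : φ f = 0) : φ = 0 := by
  have orbit_le_ker : Submodule.span 𝕜 (Set.range fun n : ℕ => (T ^ n) f) ≤ φ.ker := by
    rw [Submodule.span_le]
    rintro _ ⟨_ | n, rfl⟩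
    · exact hφf
    · change φ ((T ^ (n + 1)) f) = 0
      rw [pow_succ']
      exact DFunLike.congr_fun hφT ((T ^ n) f)
  have top_le_ker : ⊤ ≤ φ.ker :=
    hf ▸ Submodule.topologicalClosure_minimal _ orbit_le_ker φ.isClosed_ker
  ext x
  exact top_le_ker (Submodule.mem_top (x := x))

theorem exists_linearMap_ne_zero_apply_eq_zero {K W : Type*} [DivisionRing K] [AddCommGroup W]
    [Module K W] (hW : 1 < Module.finrank K W) (w : W) : ∃ ψ : W →ₗ[K] K, ψ ≠ 0 ∧ ψ w = 0 := by
  have span_lt_top : K ∙ w < ⊤ := by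
    refine lt_top_iff_ne_top.mpr fun h => hW.not_ge ?_
    exact finrank_le_one w ((Submodule.span_singleton_eq_top_iff K w).mp h)
  obtain ⟨ψ, hψ, span_le_ker⟩ := (K ∙ w).exists_le_ker_of_lt_top span_lt_top
  exact ⟨ψ, hψ, span_le_ker (Submodule.mem_span_singleton_self w)⟩

theorem IsCyclicVector.card_le_one_of_surjective [DivisionRing 𝕜] [TopologicalSpace 𝕜]
    [IsTopologicalSemiring 𝕜] [T1Space 𝕜] [Module 𝕜 V] [ContinuousAdd V]
    [ContinuousConstSMul 𝕜 V] {ι : Type*} [Fintype ι] {T : V →L[𝕜] V} {f : V}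
    (hf : IsCyclicVector T f) {L : V →L[𝕜] ι → 𝕜} (hL : Function.Surjective L)
    (hLT : L ∘L T = 0) : Fintype.card ι ≤ 1 := by
  by_contra! hι
  obtain ⟨ψ, hψ, hψf⟩ := exists_linearMap_ne_zero_apply_eq_zero (K := 𝕜)
    (by rwa [Module.finrank_fintype_fun_eq_card]) (L f)
  let Ψ : (ι → 𝕜) →L[𝕜] 𝕜 := ⟨ψ, ψ.continuous_on_pi⟩
  have ΨL_eq_zero : Ψ ∘L L = 0 :=
    hf.eq_zero_of_comp_eq_zero (by rw [ContinuousLinearMap.comp_assoc, hLT, Ψ.comp_zero]) hψf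
  refine hψ (LinearMap.ext fun y => ?_)
  obtain ⟨x, rfl⟩ := hL y
  exact DFunLike.congr_fun ΨL_eq_zero x

end CyclicVector

section SequenceSpace

variable {p : ℝ≥0∞}

theorem exists_lp_forall_mem_finset_eq {α : Type*} {E : α → Type*}
    [∀ i, NormedAddCommGroup (E i)] (s : Finset α) (y : ∀ i, E i) :
    ∃ x : lp E p, ∀ i ∈ s, x i = y i := by
  classical
  refine ⟨∑ i ∈ s, lp.single p i (y i), fun i hi => ?_⟩
  simp only [lp.coeFn_sum, Finset.sum_apply, lp.single_apply, Finset.sum_pi_single, if_pos hi]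

theorem shift_pow_apply_of_lt [Fact (1 ≤ p)] {𝕜 E : Type*} [NormedRing 𝕜]
    [NormedAddCommGroup E] [Module 𝕜 E] [IsBoundedSMul 𝕜 E]
    {S : lp (fun _ : ℕ => E) p →L[𝕜] lp (fun _ : ℕ => E) p}
    (hS0 : ∀ x, S x 0 = 0) (hS1 : ∀ x (k : ℕ), S x (k + 1) = x k)
    (x : lp (fun _ : ℕ => E) p) {m j : ℕ} (hj : j < m) : (S ^ m) x j = 0 := by
  induction m generalizing j with
  | zero => exact absurd hj j.not_lt_zero
  | succ m ih =>
    rw [pow_succ', mul_apply_eq_comp]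
    cases j with
    | zero => exact hS0 _
    | succ j => rw [hS1, ih (Nat.lt_of_succ_lt_succ hj)]

end SequenceSpace

theorem stmt5_general {𝕜 : Type*} [NormedDivisionRing 𝕜] {p : ℝ≥0∞} [Fact (1 ≤ p)]
    (S : lp (fun _ : ℕ => 𝕜) p →L[𝕜] lp (fun _ : ℕ => 𝕜) p)
    (hS0 : ∀ x : lp (fun _ : ℕ => 𝕜) p, S x 0 = 0)
    (hS1 : ∀ (x : lp (fun _ : ℕ => 𝕜) p) (k : ℕ), S x (k + 1) = x k)
    (m : ℕ) (hm : 2 ≤ m) (f : lp (fun _ : ℕ => 𝕜) p) : ¬ IsCyclicVector (S ^ m) f := by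
  intro hf
  let firstCoords : lp (fun _ : ℕ => 𝕜) p →L[𝕜] Fin m → 𝕜 :=
    .pi fun i => lp.evalCLM 𝕜 (fun _ : ℕ => 𝕜) p i
  have surjective_firstCoords : Function.Surjective firstCoords := by
    intro y
    obtain ⟨x, hx⟩ := exists_lp_forall_mem_finset_eq (p := p) (Finset.range m)
      fun i => if h : i < m then y ⟨i, h⟩ else 0
    exact ⟨x, funext fun i => (hx i (Finset.mem_range.mpr i.isLt)).trans (dif_pos i.isLt)⟩
  have firstCoords_comp_shift_pow : firstCoords ∘L S ^ m = 0 := by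
    ext x i
    exact shift_pow_apply_of_lt hS0 hS1 x i.isLt
  have card_le_one := hf.card_le_one_of_surjective surjective_firstCoords firstCoords_comp_shift_pow
  rw [Fintype.card_fin] at card_le_one
  lia

theorem stmt5 (S : lp (fun _ : ℕ => ℂ) 2 →L[ℂ] lp (fun _ : ℕ => ℂ) 2)
    (hS0 : ∀ x : lp (fun _ : ℕ => ℂ) 2, S x 0 = 0)
    (hS1 : ∀ (x : lp (fun _ : ℕ => ℂ) 2) (k : ℕ), S x (k + 1) = x k)
    (m : ℕ) (hm : 2 ≤ m) (f : lp (fun _ : ℕ => ℂ) 2) :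
    (Submodule.span ℂ (Set.range fun n : ℕ => (S ^ (m * n)) f)).topologicalClosure ≠ ⊤ := by
  simpa only [IsCyclicVector, ← pow_mul] using stmt5_general S hS0 hS1 m hm f
end

section
/- Let μ be the normalized Haar measure on the circle 𝕋 = AddCircle (2π), let L² = L²(𝕋, μ; ℂ), and let H² = {g ∈ L² : the n-th Fourier coefficient of g vanishes for every integer n < 0}, a closed subspace of L². Let φ : 𝕋 → ℂ be a bounded measurable function whose Fourier coefficients vanish for all integers n < 0, and let f ∈ H². If there exist constants A, B > 0 such that A‖g‖² ≤ ∑_{n=0}^∞ |⟨g, φⁿ · f⟩_{L²}|² ≤ B‖g‖² for all g ∈ H² (where φⁿ · f denotes the a.e. pointwise product), then |φ(x)| = 1 for μ-almost every x ∈ 𝕋; that is, φ is (the boundary function of) an inner function. -/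
open MeasureTheory Real ComplexConjugate

instance : Fact (0 < 2 * Real.pi) := ⟨by positivity⟩

/-- The normalized Haar (probability) measure on the circle `𝕋 = AddCircle (2π)`. -/
noncomputable def μC : Measure (AddCircle (2 * Real.pi)) := AddCircle.haarAddCircle

/-!
The synthesis operator of the frame `(φⁿ f)` maps `ℓ²(ℕ)` onto `H²` and intertwines the unilateral
shift with multiplication by `φ`. Pairing with the constant `1` (evaluation at the origin of the
disc) shows that this surjection is injective. Indeed, `⟨1, φ h⟩ = λ ⟨1, h⟩` with `λ = φ̂(0)`,
and `⟨1, f⟩ ≠ 0`, so the upper frame bound gives `|λ| < 1`. Viewing a sequence in the kernel as a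
power series in `z`, divide it by `z - λ`: the remainder vanishes because `⟨1, f⟩ ≠ 0`, and the
quotient is again in the kernel because multiplication by `φ - λ` is injective on `H²`, `φ` being
nonconstant. So the power series vanishes to infinite order at `λ` and is `0`.

Multiplication by `φ` on `H²` is therefore similar to an isometry, and `‖φʲ h‖ ≤ K ‖φᵏ h‖` for all
`j` and `k`. Since multiplication by characters preserves norms, the same holds for `h` in the dense
set of all `h ∈ L²` with `zᴺ h ∈ H²` for some `N`, and so for all of `L²`. Testing on indicator
functions gives `|φ|ʲ ≤ K |φ|ᵏ` almost everywhere for all `j` and `k`, which forces `|φ| = 1`.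
-/

open scoped lp ENNReal NNReal

section Frame

variable {ι 𝕜 E : Type*} [RCLike 𝕜] [NormedAddCommGroup E] [InnerProductSpace 𝕜 E]
  {v : ι → E} {A B : ℝ}

variable (𝕜) in
/-- The family `v` is a frame of the inner product space `E` with bounds `A` and `B`:
`A ‖g‖² ≤ ∑ᵢ |⟨vᵢ, g⟩|² ≤ B ‖g‖²` for all `g`. Summability is a separate field because a divergent
`tsum` is `0`. -/
structure IsFrame (v : ι → E) (A B : ℝ) : Prop where
  pos : 0 < A
  summable (g : E) : Summable fun i ↦ ‖inner 𝕜 (v i) g‖ ^ 2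
  le_tsum (g : E) : A * ‖g‖ ^ 2 ≤ ∑' i, ‖inner 𝕜 (v i) g‖ ^ 2
  tsum_le (g : E) : ∑' i, ‖inner 𝕜 (v i) g‖ ^ 2 ≤ B * ‖g‖ ^ 2

theorem isFrame_of_tsum_bounds (hA : 0 < A)
    (h : ∀ g, A * ‖g‖ ^ 2 ≤ ∑' i, ‖inner 𝕜 (v i) g‖ ^ 2 ∧
      ∑' i, ‖inner 𝕜 (v i) g‖ ^ 2 ≤ B * ‖g‖ ^ 2) : IsFrame 𝕜 v A B where
  pos := hA
  summable g := by
    -- If the series diverged, its `tsum` would be `0` and the lower bound would force `g = 0`.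
    by_contra hdiv
    have hg : g ≠ 0 := by
      rintro rfl
      simp at hdiv
    have hlower := (h g).1
    rw [tsum_eq_zero_of_not_summable hdiv] at hlower
    exact hlower.not_gt (by positivity)
  le_tsum g := (h g).1
  tsum_le g := (h g).2

theorem norm_sq_eq_tsum_norm_sq (x : ℓ²(ι, 𝕜)) : ‖x‖ ^ 2 = ∑' i, ‖x i‖ ^ 2 := by
  simpa using lp.norm_rpow_eq_tsum (p := 2) (by norm_num) x

theorem memℓp_two_iff_summable {x : ι → 𝕜} : Memℓp x 2 ↔ Summable fun i ↦ ‖x i‖ ^ 2 := by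
  simpa using memℓp_gen_iff (p := 2) (by norm_num) (f := x)

namespace IsFrame

theorem eq_zero_of_forall_inner_eq_zero (hv : IsFrame 𝕜 v A B) {g : E}
    (hg : ∀ i, inner 𝕜 (v i) g = 0) : g = 0 := by
  by_contra hne
  have hlower := hv.le_tsum g
  simp only [hg, norm_zero, ne_eq, OfNat.ofNat_ne_zero, not_false_eq_true, zero_pow,
    tsum_zero] at hlower
  have := hv.pos
  exact hlower.not_gt (by positivity)

/-- The analysis operator `g ↦ (⟨vᵢ, g⟩)ᵢ` of a frame. -/
noncomputable def analysisOp (hv : IsFrame 𝕜 v A B) : E →L[𝕜] ℓ²(ι, 𝕜) :=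
  LinearMap.mkContinuous
    { toFun := fun g ↦ ⟨fun i ↦ inner 𝕜 (v i) g, memℓp_two_iff_summable.2 (hv.summable g)⟩
      map_add' := fun x y ↦ lp.ext (funext fun _ ↦ inner_add_right _ x y)
      map_smul' := fun c x ↦ lp.ext (funext fun _ ↦ inner_smul_right _ x c) }
    √B fun g ↦ by
      rw [← Real.sqrt_sq (norm_nonneg g), ← Real.sqrt_mul' _ (sq_nonneg _)]
      refine Real.le_sqrt_of_sq_le ?_
      rw [norm_sq_eq_tsum_norm_sq]
      exact hv.tsum_le g

@[simp]
theorem analysisOp_apply (hv : IsFrame 𝕜 v A B) (g : E) (i : ι) :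
    hv.analysisOp g i = inner 𝕜 (v i) g := rfl

theorem le_norm_analysisOp_sq (hv : IsFrame 𝕜 v A B) (g : E) :
    A * ‖g‖ ^ 2 ≤ ‖hv.analysisOp g‖ ^ 2 := by
  rw [norm_sq_eq_tsum_norm_sq]
  exact hv.le_tsum g

variable [CompleteSpace E]

/-- The synthesis operator `c ↦ ∑ᵢ cᵢ vᵢ` of a frame, encoded as the adjoint of its analysis
operator. -/
noncomputable def synthesisOp (hv : IsFrame 𝕜 v A B) : ℓ²(ι, 𝕜) →L[𝕜] E :=
  ContinuousLinearMap.adjoint hv.analysisOp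

@[simp]
theorem synthesisOp_single [DecidableEq ι] (hv : IsFrame 𝕜 v A B) (i : ι) (a : 𝕜) :
    hv.synthesisOp (lp.single 2 i a) = a • v i := by
  refine ext_inner_right 𝕜 fun g ↦ ?_
  rw [synthesisOp, ContinuousLinearMap.adjoint_inner_left, lp.inner_single_left, analysisOp_apply,
    inner_smul_left, RCLike.inner_apply, mul_comm]

theorem synthesisOp_surjective (hv : IsFrame 𝕜 v A B) : Function.Surjective hv.synthesisOp := by
  -- The frame operator is bounded below as a quadratic form, hence invertible.
  have hunit : IsUnit (hv.synthesisOp ∘L hv.analysisOp) := by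
    refine ContinuousLinearMap.isUnit_of_forall_le_norm_inner_map _ (c := ⟨A, hv.pos.le⟩) hv.pos
      fun g ↦ ?_
    rw [ContinuousLinearMap.comp_apply, synthesisOp, ContinuousLinearMap.adjoint_inner_left,
      inner_self_eq_norm_sq_to_K, norm_pow, RCLike.norm_ofReal, abs_norm, mul_comm]
    exact hv.le_norm_analysisOp_sq g
  intro g
  obtain ⟨x, hx⟩ := (ContinuousLinearMap.isUnit_iff_bijective.1 hunit).2 g
  exact ⟨hv.analysisOp x, hx⟩

end IsFrame

end Frame

section Shift

variable {𝕜 : Type*} [RCLike 𝕜]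

variable (𝕜) in
/-- The linear map underlying `unilateralShift`. -/
noncomputable def unilateralShiftₗ : ℓ²(ℕ, 𝕜) →ₗ[𝕜] ℓ²(ℕ, 𝕜) where
  toFun x := ⟨fun n ↦ n.casesOn 0 x, memℓp_two_iff_summable.2 <| by
    rw [← summable_nat_add_iff 1]
    exact memℓp_two_iff_summable.1 (lp.memℓp x)⟩
  map_add' x y := lp.ext <| funext fun n ↦ by
    cases n with
    | zero => exact (add_zero 0).symm
    | succ n => rfl
  map_smul' a x := lp.ext <| funext fun n ↦ by
    cases n with
    | zero => exact (mul_zero a).symm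
    | succ n => rfl

variable (𝕜) in
/-- The unilateral shift `(x₀, x₁, …) ↦ (0, x₀, x₁, …)` on `ℓ²(ℕ)`. -/
noncomputable def unilateralShift : ℓ²(ℕ, 𝕜) →ₗᵢ[𝕜] ℓ²(ℕ, 𝕜) where
  toLinearMap := unilateralShiftₗ 𝕜
  norm_map' x := by
    rw [← sq_eq_sq₀ (norm_nonneg _) (norm_nonneg _), norm_sq_eq_tsum_norm_sq,
      norm_sq_eq_tsum_norm_sq,
      (memℓp_two_iff_summable.1 (lp.memℓp (unilateralShiftₗ 𝕜 x))).tsum_eq_zero_add]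
    simp [unilateralShiftₗ]

@[simp]
theorem unilateralShift_zero (x : ℓ²(ℕ, 𝕜)) : unilateralShift 𝕜 x 0 = 0 := rfl

@[simp]
theorem unilateralShift_succ (x : ℓ²(ℕ, 𝕜)) (n : ℕ) : unilateralShift 𝕜 x (n + 1) = x n := rfl

theorem unilateralShift_single (n : ℕ) (a : 𝕜) :
    unilateralShift 𝕜 (lp.single 2 n a) = lp.single 2 (n + 1) a := by
  refine lp.ext (funext fun k ↦ ?_)
  cases k <;> simp [Pi.single_apply]

theorem adjoint_unilateralShift_apply (x : ℓ²(ℕ, 𝕜)) (n : ℕ) :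
    ContinuousLinearMap.adjoint (unilateralShift 𝕜).toContinuousLinearMap x n = x (n + 1) := by
  have h := ContinuousLinearMap.adjoint_inner_right (unilateralShift 𝕜).toContinuousLinearMap
    (lp.single 2 n 1) x
  rw [LinearIsometry.coe_toContinuousLinearMap, unilateralShift_single, lp.inner_single_left,
    lp.inner_single_left] at h
  simpa using h

theorem exists_eq_single_add_shift_sub_smul {l : 𝕜} (hl : ‖l‖ < 1) (c : ℓ²(ℕ, 𝕜)) :
    ∃ (a : 𝕜) (d : ℓ²(ℕ, 𝕜)), c = lp.single 2 0 a + (unilateralShift 𝕜 d - l • d) := by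
  -- With `R` the backward shift and `c = e - l R e`, the quotient is `d = R e`.
  let R := ContinuousLinearMap.adjoint (unilateralShift 𝕜).toContinuousLinearMap
  have hR : ‖R‖ ≤ 1 := by
    simpa only [R, LinearIsometryEquiv.norm_map] using
      (unilateralShift 𝕜).norm_toContinuousLinearMap_le
  have hlR : ‖l • R‖ < 1 := by
    rw [norm_smul]
    exact (mul_le_of_le_one_right (norm_nonneg l) hR).trans_lt hl
  obtain ⟨e, he⟩ : ∃ e, (1 - l • R) e = c :=
    (ContinuousLinearMap.isUnit_iff_bijective.1 (isUnit_one_sub_of_norm_lt_one hlR)).2 c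
  refine ⟨e 0, R e, ?_⟩
  rw [← he]
  refine lp.ext (funext fun n ↦ ?_)
  cases n <;> simp [R, adjoint_unilateralShift_apply, sub_eq_add_neg]

/-- The power series `w ↦ ∑ₙ cₙ wⁿ` with coefficient sequence `c`. -/
noncomputable def genFun (c : ℓ²(ℕ, 𝕜)) : 𝕜 → 𝕜 :=
  FormalMultilinearSeries.ofScalarsSum c

theorem hasFPowerSeriesOnBall_genFun (c : ℓ²(ℕ, 𝕜)) :
    HasFPowerSeriesOnBall (genFun c) (FormalMultilinearSeries.ofScalars 𝕜 c) 0 1 := by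
  have hradius : 1 ≤ (FormalMultilinearSeries.ofScalars 𝕜 c).radius := by
    refine FormalMultilinearSeries.le_radius_of_bound (r := 1) _ ‖c‖ fun n ↦ ?_
    rw [FormalMultilinearSeries.ofScalars_norm, NNReal.coe_one, one_pow, mul_one]
    exact lp.norm_apply_le_norm two_ne_zero c n
  exact (FormalMultilinearSeries.hasFPowerSeriesOnBall _ (one_pos.trans_le hradius)).mono one_pos
    hradius

theorem analyticOnNhd_genFun (c : ℓ²(ℕ, 𝕜)) : AnalyticOnNhd 𝕜 (genFun c) (Metric.ball 0 1) := by
  simpa [← Metric.eball_ofReal] using (hasFPowerSeriesOnBall_genFun c).analyticOnNhd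

theorem hasSum_genFun (c : ℓ²(ℕ, 𝕜)) {w : 𝕜} (hw : ‖w‖ < 1) :
    HasSum (fun n ↦ c n * w ^ n) (genFun c w) := by
  have hmem : w ∈ Metric.eball (0 : 𝕜) 1 := by
    rwa [← ENNReal.ofReal_one, Metric.eball_ofReal, mem_ball_zero_iff]
  simpa [FormalMultilinearSeries.ofScalars_apply_eq, mul_comm] using
    (hasFPowerSeriesOnBall_genFun c).hasSum hmem

theorem genFun_shift_sub_smul (l : 𝕜) (d : ℓ²(ℕ, 𝕜)) {w : 𝕜} (hw : ‖w‖ < 1) :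
    genFun (unilateralShift 𝕜 d - l • d) w = (w - l) * genFun d w := by
  have hshift : HasSum (fun n ↦ unilateralShift 𝕜 d n * w ^ n) (w * genFun d w) := by
    rw [← hasSum_nat_add_iff' 1]
    simpa [pow_succ', mul_left_comm] using (hasSum_genFun d hw).mul_left w
  have hsub := hshift.sub ((hasSum_genFun d hw).mul_left l)
  rw [← sub_mul] at hsub
  refine (hasSum_genFun _ hw).unique (hsub.congr_fun fun n ↦ ?_)
  change (_ - l * d n) * w ^ n = _
  rw [sub_mul, mul_assoc]

theorem eq_zero_of_genFun_eventuallyEq_zero {c : ℓ²(ℕ, 𝕜)} (hc : genFun c =ᶠ[nhds 0] 0) :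
    c = 0 :=
  lp.ext <| (FormalMultilinearSeries.ofScalars_series_eq_zero (E := 𝕜)).1
    ((hasFPowerSeriesOnBall_genFun c).hasFPowerSeriesAt.congr hc).eq_zero

theorem eq_zero_of_forall_mem_exists_shift_sub_smul {l : 𝕜} (hl : ‖l‖ < 1) {K : Set ℓ²(ℕ, 𝕜)}
    (hK : ∀ c ∈ K, ∃ d ∈ K, c = unilateralShift 𝕜 d - l • d) {c : ℓ²(ℕ, 𝕜)} (hc : c ∈ K) :
    c = 0 := by
  have hl' : l ∈ Metric.ball (0 : 𝕜) 1 := mem_ball_zero_iff.2 hl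
  have hfactor : ∀ j : ℕ, ∃ d ∈ K, ∀ w : 𝕜, ‖w‖ < 1 → genFun c w = (w - l) ^ j * genFun d w := by
    intro j
    induction j with
    | zero => exact ⟨c, hc, by simp⟩
    | succ j ih =>
      obtain ⟨d, hd, hcd⟩ := ih
      obtain ⟨e, he, rfl⟩ := hK d hd
      refine ⟨e, he, fun w hw ↦ ?_⟩
      rw [hcd w hw, genFun_shift_sub_smul l e hw, pow_succ, mul_assoc]
  have horder : analyticOrderAt (genFun c) l = ⊤ := by
    refine ENat.eq_top_iff_forall_ge.2 fun j ↦ ?_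
    obtain ⟨d, -, hcd⟩ := hfactor j
    rw [natCast_le_analyticOrderAt (analyticOnNhd_genFun c l hl')]
    refine ⟨_, analyticOnNhd_genFun d l hl', ?_⟩
    filter_upwards [Metric.isOpen_ball.mem_nhds hl'] with w hw
    exact hcd w (mem_ball_zero_iff.1 hw)
  have hzero : Set.EqOn (genFun c) 0 (Metric.ball 0 1) :=
    (analyticOnNhd_genFun c).eqOn_zero_of_preconnected_of_eventuallyEq_zero
      (convex_ball (0 : 𝕜) 1).isPreconnected hl' (analyticOrderAt_eq_top.1 horder)
  exact eq_zero_of_genFun_eventuallyEq_zero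
    (hzero.eventuallyEq_of_mem (Metric.ball_mem_nhds 0 one_pos))

end Shift

section Orbit

variable {𝕜 E : Type*} [RCLike 𝕜] [NormedAddCommGroup E] [InnerProductSpace 𝕜 E]
  {S : E →L[𝕜] E} {v e : E} {l : 𝕜} {A B : ℝ}

theorem inner_iterate_of_forall_inner_apply (heS : ∀ h, inner 𝕜 e (S h) = l * inner 𝕜 e h) (n : ℕ)
    (h : E) : inner 𝕜 e (S^[n] h) = l ^ n * inner 𝕜 e h := by
  induction n with
  | zero => simp
  | succ n ih => rw [Function.iterate_succ_apply', heS, ih, pow_succ', mul_assoc]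

theorem exists_norm_iterate_le_of_semiconj {F : Type*} [NormedAddCommGroup F] [NormedSpace 𝕜 F]
    {V : F ≃L[𝕜] E} {W : F →ₗᵢ[𝕜] F} (hV : Function.Semiconj V W S) :
    ∃ K : ℝ≥0, ∀ (j k : ℕ) (h : E), ‖S^[j] h‖ ≤ K * ‖S^[k] h‖ := by
  refine ⟨‖(V : F →L[𝕜] E)‖₊ * ‖(V.symm : E →L[𝕜] F)‖₊, fun j k h ↦ ?_⟩
  obtain ⟨x, rfl⟩ := V.surjective h
  have hW (n : ℕ) : ‖W^[n] x‖ = ‖x‖ := by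
    induction n with
    | zero => rfl
    | succ n ih => rw [Function.iterate_succ_apply', W.norm_map, ih]
  have hlower : ‖x‖ ≤ ‖(V.symm : E →L[𝕜] F)‖ * ‖V (W^[k] x)‖ := by
    simpa [hW] using (V.symm : E →L[𝕜] F).le_opNorm (V (W^[k] x))
  rw [← hV.iterate_right j, ← hV.iterate_right k, NNReal.coe_mul, coe_nnnorm, coe_nnnorm, mul_assoc]
  calc ‖V (W^[j] x)‖ ≤ ‖(V : F →L[𝕜] E)‖ * ‖W^[j] x‖ := (V : F →L[𝕜] E).le_opNorm _
    _ = ‖(V : F →L[𝕜] E)‖ * ‖x‖ := by rw [hW]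
    _ ≤ _ := by gcongr

namespace IsFrame

theorem rank_le_one_of_orbit_of_apply_eq_smul (hv : IsFrame 𝕜 (fun n ↦ S^[n] v) A B)
    (hS : S v = l • v) : Module.rank 𝕜 E ≤ 1 := by
  have hiter (n : ℕ) : S^[n] v = l ^ n • v := by
    induction n with
    | zero => simp
    | succ n ih => rw [Function.iterate_succ_apply', ih, map_smul, hS, smul_smul, pow_succ]
  have hinj : Function.Injective (innerₛₗ 𝕜 v) := by
    refine (injective_iff_map_eq_zero _).2 fun g hg ↦ hv.eq_zero_of_forall_inner_eq_zero fun n ↦ ?_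
    rw [hiter, inner_smul_left, show inner 𝕜 v g = 0 from hg, mul_zero]
  simpa using LinearMap.lift_rank_le_of_injective _ hinj

theorem inner_ne_zero_of_orbit (hv : IsFrame 𝕜 (fun n ↦ S^[n] v) A B) (he : e ≠ 0)
    (heS : ∀ h, inner 𝕜 e (S h) = l * inner 𝕜 e h) : inner 𝕜 e v ≠ 0 := by
  refine fun hev ↦ he (hv.eq_zero_of_forall_inner_eq_zero fun n ↦ inner_eq_zero_symm.1 ?_)
  rw [inner_iterate_of_forall_inner_apply heS, hev, mul_zero]

theorem norm_eigenvalue_lt_one_of_orbit (hv : IsFrame 𝕜 (fun n ↦ S^[n] v) A B) (he : e ≠ 0)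
    (heS : ∀ h, inner 𝕜 e (S h) = l * inner 𝕜 e h) : ‖l‖ < 1 := by
  have hsum : Summable fun n : ℕ ↦ (‖l‖ ^ 2) ^ n * ‖inner 𝕜 e v‖ ^ 2 := by
    refine (hv.summable e).congr fun n ↦ ?_
    rw [norm_inner_symm, inner_iterate_of_forall_inner_apply heS, norm_mul, norm_pow, mul_pow,
      pow_right_comm]
  have hev : ‖inner 𝕜 e v‖ ^ 2 ≠ 0 := by simpa using hv.inner_ne_zero_of_orbit he heS
  rw [summable_mul_right_iff hev, summable_geometric_iff_norm_lt_one, norm_pow, norm_norm] at hsum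
  exact (sq_lt_one_iff₀ (norm_nonneg l)).1 hsum

variable [CompleteSpace E]

theorem semiconj_synthesisOp (hv : IsFrame 𝕜 (fun n ↦ S^[n] v) A B) :
    Function.Semiconj hv.synthesisOp (unilateralShift 𝕜) S := by
  have h : hv.synthesisOp ∘L (unilateralShift 𝕜).toContinuousLinearMap = S ∘L hv.synthesisOp := by
    refine lp.ext_continuousLinearMap ENNReal.ofNat_ne_top fun n ↦ ?_
    ext
    simp [unilateralShift_single, Function.iterate_succ_apply']
  exact fun x ↦ DFunLike.congr_fun h x

theorem synthesisOp_injective_of_orbit (hv : IsFrame 𝕜 (fun n ↦ S^[n] v) A B) (he : e ≠ 0)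
    (heS : ∀ h, inner 𝕜 e (S h) = l * inner 𝕜 e h) (hinj : ∀ h, S h = l • h → h = 0) :
    Function.Injective hv.synthesisOp := by
  have hl := hv.norm_eigenvalue_lt_one_of_orbit he heS
  refine (injective_iff_map_eq_zero _).2 fun c hc ↦
    eq_zero_of_forall_mem_exists_shift_sub_smul hl (K := {c | hv.synthesisOp c = 0}) ?_ hc
  intro c hc
  obtain ⟨a, d, rfl⟩ := exists_eq_single_add_shift_sub_smul hl c
  have hsplit : a • v + (S (hv.synthesisOp d) - l • hv.synthesisOp d) = 0 := by
    simpa [(hv.semiconj_synthesisOp).eq] using hc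
  -- `e` is orthogonal to the range of `S - l` but not to `v`.
  have ha : a = 0 := by
    have := congrArg (inner 𝕜 e) hsplit
    simpa [inner_add_right, inner_sub_right, inner_smul_right, heS,
      hv.inner_ne_zero_of_orbit he heS] using this
  subst ha
  exact ⟨d, hinj _ (by simpa [sub_eq_zero] using hsplit), by simp⟩

theorem exists_norm_iterate_le_of_orbit (hv : IsFrame 𝕜 (fun n ↦ S^[n] v) A B) (he : e ≠ 0)
    (heS : ∀ h, inner 𝕜 e (S h) = l * inner 𝕜 e h) (hinj : ∀ h, S h = l • h → h = 0) :
    ∃ K : ℝ≥0, ∀ (j k : ℕ) (h : E), ‖S^[j] h‖ ≤ K * ‖S^[k] h‖ :=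
  exists_norm_iterate_le_of_semiconj
    (V := .ofBijective hv.synthesisOp
      (LinearMap.ker_eq_bot.2 (hv.synthesisOp_injective_of_orbit he heS hinj))
      (LinearMap.range_eq_top.2 hv.synthesisOp_surjective)) hv.semiconj_synthesisOp

end IsFrame

end Orbit

section MulOp

variable {α 𝕜 E : Type*} [MeasurableSpace α] {μ : Measure α} [RCLike 𝕜] [NormedAddCommGroup E]
  [NormedSpace 𝕜 E] {p : ℝ≥0∞} [Fact (1 ≤ p)] {φ ψ : α → 𝕜}

/-- Multiplication by an essentially bounded function, as a bounded operator on `Lᵖ`. -/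
noncomputable def mulOp (hφ : MemLp φ ∞ μ) : Lp E p μ →L[𝕜] Lp E p μ :=
  (ContinuousLinearMap.lsmul 𝕜 𝕜).holderL μ ∞ p p hφ.toLp

theorem coeFn_mulOp (hφ : MemLp φ ∞ μ) (g : Lp E p μ) : mulOp hφ g =ᵐ[μ] fun x ↦ φ x • g x := by
  filter_upwards [(ContinuousLinearMap.lsmul 𝕜 𝕜).coeFn_holder (r := p) hφ.toLp g, hφ.coeFn_toLp]
    with x hx hφx
  rw [mulOp, ContinuousLinearMap.holderL_apply_apply, hx, hφx, ContinuousLinearMap.lsmul_apply]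

theorem mulOp_commute (hφ : MemLp φ ∞ μ) (hψ : MemLp ψ ∞ μ) :
    Function.Commute (mulOp hφ : Lp E p μ → Lp E p μ) (mulOp hψ) := by
  refine fun g ↦ Lp.ext ?_
  filter_upwards [coeFn_mulOp hφ (mulOp hψ g), coeFn_mulOp hψ (mulOp hφ g), coeFn_mulOp hφ g,
    coeFn_mulOp hψ g] with x hφψ hψφ hφx hψx
  rw [hφψ, hψφ, hφx, hψx, smul_comm]

theorem coeFn_iterate_mulOp (hφ : MemLp φ ∞ μ) (g : Lp E p μ) (k : ℕ) :
    (mulOp hφ)^[k] g =ᵐ[μ] fun x ↦ φ x ^ k • g x := by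
  induction k with
  | zero => simp
  | succ k ih =>
    rw [Function.iterate_succ_apply']
    filter_upwards [coeFn_mulOp hφ ((mulOp hφ)^[k] g), ih] with x hx ihx
    rw [hx, ihx, smul_smul, pow_succ']

theorem norm_mulOp_of_norm_eq_one (hφ : MemLp φ ∞ μ) (hφ₁ : ∀ᵐ x ∂μ, ‖φ x‖ = 1) (g : Lp E p μ) :
    ‖mulOp hφ g‖ = ‖g‖ := by
  rw [Lp.norm_def, Lp.norm_def]
  refine congrArg ENNReal.toReal (eLpNorm_congr_norm_ae ?_)
  filter_upwards [coeFn_mulOp hφ g, hφ₁] with x hx hφx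
  rw [hx, norm_smul, hφx, one_mul]

theorem ae_norm_le_of_forall_eLpNorm_restrict_le {F G : Type*} [NormedAddCommGroup F]
    [NormedAddCommGroup G] {μ : Measure α} [SigmaFinite μ] {p : ℝ≥0∞} (hp₀ : p ≠ 0) (hp : p ≠ ∞)
    {f : α → F} {g : α → G} (hf : AEStronglyMeasurable f μ)
    (h : ∀ s, MeasurableSet s → μ s < ∞ →
      eLpNorm f p (μ.restrict s) ≤ eLpNorm g p (μ.restrict s)) :
    ∀ᵐ x ∂μ, ‖f x‖ ≤ ‖g x‖ := by
  have hp' : 0 < p.toReal := ENNReal.toReal_pos hp₀ hp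
  have hpow : (fun x ↦ ‖f x‖ₑ ^ p.toReal) ≤ᵐ[μ] fun x ↦ ‖g x‖ₑ ^ p.toReal := by
    refine ae_le_of_forall_setLIntegral_le_of_sigmaFinite₀ (hf.enorm.pow_const _) fun s hs hμs ↦ ?_
    have := h s hs hμs
    rwa [eLpNorm_eq_lintegral_rpow_enorm_toReal hp₀ hp,
      eLpNorm_eq_lintegral_rpow_enorm_toReal hp₀ hp,
      ENNReal.rpow_le_rpow_iff (one_div_pos.2 hp')] at this
  filter_upwards [hpow] with x hx
  exact enorm_le_iff_norm_le.1 ((ENNReal.rpow_le_rpow_iff hp').1 hx)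

theorem ae_pow_norm_le_of_norm_iterate_mulOp_le [SigmaFinite μ] (hp : p ≠ ∞) (hφ : MemLp φ ∞ μ)
    {K : ℝ≥0} {j k : ℕ}
    (h : ∀ g : Lp 𝕜 p μ, ‖(mulOp hφ)^[j] g‖ ≤ K * ‖(mulOp hφ)^[k] g‖) :
    ∀ᵐ x ∂μ, ‖φ x‖ ^ j ≤ K * ‖φ x‖ ^ k := by
  have hrestrict (s : Set α) (hs : MeasurableSet s) (hμs : μ s < ∞) :
      eLpNorm (fun x ↦ φ x ^ j) p (μ.restrict s) ≤
        eLpNorm (fun x ↦ ((K : ℝ) : 𝕜) • φ x ^ k) p (μ.restrict s) := by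
    let g : Lp 𝕜 p μ := indicatorConstLp p hs hμs.ne 1
    have hg (n : ℕ) : ‖(mulOp hφ)^[n] g‖ₑ = eLpNorm (fun x ↦ φ x ^ n) p (μ.restrict s) := by
      rw [Lp.enorm_def, ← eLpNorm_indicator_eq_eLpNorm_restrict hs]
      refine eLpNorm_congr_ae ?_
      filter_upwards [coeFn_iterate_mulOp hφ g n,
        indicatorConstLp_coeFn (p := p) (hs := hs) (hμs := hμs.ne) (c := (1 : 𝕜))] with x hx h1
      rw [hx, h1]
      by_cases hxs : x ∈ s <;> simp [hxs]
    have hKg : ‖(mulOp hφ)^[j] g‖ₑ ≤ ‖((K : ℝ) : 𝕜) • (mulOp hφ)^[k] g‖ₑ :=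
      enorm_le_iff_norm_le.2 (by simpa [norm_smul] using h g)
    rw [enorm_smul, hg, hg, ← eLpNorm_const_smul] at hKg
    exact hKg
  have hle := ae_norm_le_of_forall_eLpNorm_restrict_le
    (one_pos.trans_le (Fact.out : 1 ≤ p)).ne' hp (hφ.1.pow j) hrestrict
  filter_upwards [hle] with x hx
  simpa using hx

theorem eq_one_of_forall_pow_le_mul_pow {r K : ℝ} (hr : 0 ≤ r) (h : ∀ j k : ℕ, r ^ j ≤ K * r ^ k) :
    r = 1 := by
  refine le_antisymm ?_ ?_ <;> by_contra! hlt
  · obtain ⟨j, hj⟩ := pow_unbounded_of_one_lt K hlt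
    exact hj.not_ge (by simpa using h j 0)
  · have htendsto := (tendsto_pow_atTop_nhds_zero_of_lt_one hr hlt).const_mul K
    rw [mul_zero] at htendsto
    exact zero_lt_one.not_ge (ge_of_tendsto' htendsto fun k ↦ by simpa using h 0 k)

theorem ae_norm_eq_one_of_forall_norm_iterate_mulOp_le [SigmaFinite μ] (hp : p ≠ ∞)
    (hφ : MemLp φ ∞ μ) {K : ℝ≥0}
    (h : ∀ (j k : ℕ) (g : Lp 𝕜 p μ), ‖(mulOp hφ)^[j] g‖ ≤ K * ‖(mulOp hφ)^[k] g‖) :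
    ∀ᵐ x ∂μ, ‖φ x‖ = 1 := by
  have hpow : ∀ᵐ x ∂μ, ∀ j k : ℕ, ‖φ x‖ ^ j ≤ K * ‖φ x‖ ^ k :=
    ae_all_iff.2 fun j ↦ ae_all_iff.2 fun k ↦
      ae_pow_norm_le_of_norm_iterate_mulOp_le hp hφ (h j k)
  filter_upwards [hpow] with x hx
  exact eq_one_of_forall_pow_le_mul_pow (norm_nonneg _) hx

end MulOp

section FourierCoeff

open AddCircle

variable {T : ℝ}

theorem norm_fourier_apply (n : ℤ) (x : AddCircle T) : ‖fourier n x‖ = 1 := by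
  rw [fourier_apply, Circle.norm_coe]

variable [Fact (0 < T)]

theorem memLp_top_fourier (n : ℤ) : MemLp (fourier n : AddCircle T → ℂ) ∞ haarAddCircle :=
  memLp_top_of_bound (fourier n).continuous.aestronglyMeasurable 1
    (.of_forall fun x ↦ (norm_fourier_apply n x).le)

theorem mulOp_fourier_fourierLp (N n : ℤ) :
    mulOp (memLp_top_fourier N) (fourierLp 2 n : Lp ℂ 2 (haarAddCircle (T := T))) =
      fourierLp 2 (N + n) := by
  refine Lp.ext ?_
  filter_upwards [coeFn_mulOp (memLp_top_fourier N) (fourierLp 2 n), coeFn_fourierLp 2 n,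
    coeFn_fourierLp 2 (N + n)] with x hmul hn hNn
  rw [hmul, hn, hNn, fourier_add, smul_eq_mul]

theorem fourierCoeff_eq_inner_fourierLp (g : Lp ℂ 2 (haarAddCircle (T := T))) (n : ℤ) :
    fourierCoeff g n = inner ℂ (fourierLp 2 n) g := by
  rw [← fourierBasis_repr, HilbertBasis.repr_apply_apply, coe_fourierBasis]

theorem eq_zero_of_forall_fourierCoeff_eq_zero {g : Lp ℂ 2 (haarAddCircle (T := T))}
    (hg : ∀ n, fourierCoeff g n = 0) : g = 0 := by
  refine fourierBasis.repr.map_eq_zero_iff.1 (lp.ext (funext fun n ↦ ?_))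
  rw [fourierBasis_repr, hg]
  rfl

theorem hasSum_fourierCoeff_mul {f g : AddCircle T → ℂ} (hf : MemLp f 2 haarAddCircle)
    (hg : MemLp g 2 haarAddCircle) (n : ℤ) :
    HasSum (fun k ↦ fourierCoeff f (n - k) * fourierCoeff g k) (fourierCoeff (f * g) n) := by
  -- Parseval's identity for `g` and the function `conj f * fourier n`.
  let F : Lp ℂ 2 (haarAddCircle (T := T)) := mulOp (memLp_top_fourier n) hf.star.toLp
  have hF : F =ᵐ[haarAddCircle] fun x ↦ fourier n x * conj (f x) := by
    filter_upwards [coeFn_mulOp (memLp_top_fourier n) hf.star.toLp, hf.star.coeFn_toLp]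
      with x hx hfx
    rw [hx, hfx, smul_eq_mul, Pi.star_apply, RCLike.star_def]
  have hFk (k : ℤ) : inner ℂ F (fourierLp 2 k) = fourierCoeff f (n - k) := by
    rw [L2.inner_def]
    refine integral_congr_ae ?_
    filter_upwards [hF, coeFn_fourierLp 2 k] with x hFx hk
    rw [hFx, hk, neg_sub, sub_eq_add_neg, fourier_add, fourier_neg]
    simp [mul_assoc]
  have hFg : inner ℂ F hg.toLp = fourierCoeff (f * g) n := by
    rw [L2.inner_def]
    refine integral_congr_ae ?_
    filter_upwards [hF, hg.coeFn_toLp] with x hFx hgx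
    rw [hFx, hgx, fourier_neg, RCLike.inner_apply, map_mul, Complex.conj_conj, smul_eq_mul,
      Pi.mul_apply]
    ring
  have hparseval := fourierBasis.hasSum_inner_mul_inner F hg.toLp
  rw [hFg] at hparseval
  refine hparseval.congr_fun fun k ↦ ?_
  rw [coe_fourierBasis, hFk, ← fourierCoeff_eq_inner_fourierLp, fourierCoeff_congr_ae hg.coeFn_toLp]

theorem fourierCoeff_mul_of_forall_lt {f g : AddCircle T → ℂ} (hf : MemLp f 2 haarAddCircle)
    (hg : MemLp g 2 haarAddCircle) {a b : ℤ} (hfa : ∀ n < a, fourierCoeff f n = 0)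
    (hgb : ∀ n < b, fourierCoeff g n = 0) :
    fourierCoeff (f * g) (a + b) = fourierCoeff f a * fourierCoeff g b := by
  refine (hasSum_fourierCoeff_mul hf hg (a + b)).unique ?_
  convert hasSum_single b fun k hk ↦ ?_ using 1
  · rw [add_sub_cancel_right]
  · obtain hlt | hgt := hk.lt_or_gt
    · rw [hgb k hlt, mul_zero]
    · rw [hfa _ (by lia), zero_mul]

theorem fourierCoeff_mul_eq_zero_of_lt {f g : AddCircle T → ℂ} (hf : MemLp f 2 haarAddCircle)
    (hg : MemLp g 2 haarAddCircle) {a b n : ℤ} (hfa : ∀ n < a, fourierCoeff f n = 0)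
    (hgb : ∀ n < b, fourierCoeff g n = 0) (hn : n < a + b) : fourierCoeff (f * g) n = 0 := by
  have h := fourierCoeff_mul_of_forall_lt hf hg (a := n - b) (fun m hm ↦ hfa m (by lia)) hgb
  rwa [sub_add_cancel, hfa _ (by lia), zero_mul] at h

end FourierCoeff

section HardySpace

open AddCircle

variable {T : ℝ} [Fact (0 < T)] {φ : AddCircle T → ℂ}

variable (T) in
/-- The Hardy space `H²` of the circle, as a subspace of `L²`. Defining it as the orthogonal
complement of the negative characters makes it closed, hence complete, by construction. -/
noncomputable def hardySpace : Submodule ℂ (Lp ℂ 2 (haarAddCircle (T := T))) :=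
  (Submodule.span ℂ (fourierLp 2 '' Set.Iio 0))ᗮ

instance : CompleteSpace (hardySpace T) :=
  inferInstanceAs (CompleteSpace (Submodule.span ℂ (fourierLp 2 '' Set.Iio 0))ᗮ)

theorem mem_hardySpace_iff {g : Lp ℂ 2 (haarAddCircle (T := T))} :
    g ∈ hardySpace T ↔ ∀ n < 0, fourierCoeff g n = 0 := by
  simp only [fourierCoeff_eq_inner_fourierLp]
  refine ⟨fun hg n hn ↦ hg _ (Submodule.subset_span (Set.mem_image_of_mem _ hn)), fun hg ↦ ?_⟩
  rw [hardySpace, Submodule.mem_orthogonal]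
  intro u hu
  induction hu using Submodule.span_induction with
  | mem u hu =>
    obtain ⟨n, hn, rfl⟩ := hu
    exact hg n hn
  | zero => exact inner_zero_left g
  | add u w _ _ hu hw => rw [inner_add_left, hu, hw, add_zero]
  | smul a u _ hu => rw [inner_smul_left, hu, mul_zero]

theorem fourierLp_mem_hardySpace {n : ℤ} (hn : 0 ≤ n) : fourierLp 2 n ∈ hardySpace T := by
  refine mem_hardySpace_iff.2 fun k hk ↦ ?_
  rw [fourierCoeff_eq_inner_fourierLp]
  exact orthonormal_fourier.2 (by lia)

variable (T) in
theorem aleph0_le_rank_hardySpace : Cardinal.aleph0 ≤ Module.rank ℂ (hardySpace T) := by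
  let u (n : ℕ) : hardySpace T := ⟨fourierLp 2 n, fourierLp_mem_hardySpace n.cast_nonneg⟩
  have hu : LinearIndependent ℂ u := by
    refine .of_comp (hardySpace T).subtype ?_
    exact orthonormal_fourier.linearIndependent.comp _ Nat.cast_injective
  exact hu.aleph0_le_rank

theorem exists_leading_fourierCoeff {g : Lp ℂ 2 (haarAddCircle (T := T))} (hg : g ∈ hardySpace T)
    (hg₀ : g ≠ 0) : ∃ m, fourierCoeff g m ≠ 0 ∧ ∀ n < m, fourierCoeff g n = 0 := by
  have hbdd (n : ℤ) (hn : fourierCoeff g n ≠ 0) : 0 ≤ n := by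
    contrapose! hn
    exact mem_hardySpace_iff.1 hg n hn
  have hne : ∃ n, fourierCoeff g n ≠ 0 := by
    contrapose! hg₀
    exact eq_zero_of_forall_fourierCoeff_eq_zero hg₀
  obtain ⟨m, hm, hleast⟩ := Int.exists_least_of_bdd ⟨0, hbdd⟩ hne
  refine ⟨m, hm, fun n hn ↦ ?_⟩
  contrapose! hn
  exact hleast n hn

theorem eq_zero_or_eq_zero_of_mul_ae_eq_zero {f g : Lp ℂ 2 (haarAddCircle (T := T))}
    (hf : f ∈ hardySpace T) (hg : g ∈ hardySpace T) (hfg : ⇑f * ⇑g =ᵐ[haarAddCircle] 0) :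
    f = 0 ∨ g = 0 := by
  by_contra! hne
  obtain ⟨a, ha, hfa⟩ := exists_leading_fourierCoeff hf hne.1
  obtain ⟨b, hb, hgb⟩ := exists_leading_fourierCoeff hg hne.2
  have hab := fourierCoeff_mul_of_forall_lt (Lp.memLp f) (Lp.memLp g) hfa hgb
  rw [fourierCoeff_congr_ae hfg] at hab
  exact mul_ne_zero ha hb (by simpa [fourierCoeff] using hab.symm)

theorem fourierCoeff_mulOp (hφ : MemLp φ ∞ haarAddCircle) (g : Lp ℂ 2 (haarAddCircle (T := T)))
    (n : ℤ) : fourierCoeff (mulOp hφ g) n = fourierCoeff (φ * ⇑g) n :=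
  congrFun (fourierCoeff_congr_ae (coeFn_mulOp hφ g)) n

theorem mulOp_mem_hardySpace (hφ : MemLp φ ∞ haarAddCircle) (hφH : ∀ n < 0, fourierCoeff φ n = 0)
    {g : Lp ℂ 2 (haarAddCircle (T := T))} (hg : g ∈ hardySpace T) : mulOp hφ g ∈ hardySpace T := by
  refine mem_hardySpace_iff.2 fun n hn ↦ ?_
  rw [fourierCoeff_mulOp]
  exact fourierCoeff_mul_eq_zero_of_lt (hφ.mono_exponent le_top) (Lp.memLp g) hφH
    (mem_hardySpace_iff.1 hg) (by simpa using hn)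

theorem dense_setOf_exists_mulOp_fourier_mem_hardySpace :
    Dense {g : Lp ℂ 2 (haarAddCircle (T := T)) |
      ∃ N, mulOp (memLp_top_fourier N) g ∈ hardySpace T} := by
  refine fun g ↦ mem_closure_of_tendsto (hasSum_fourier_series_L2 g) (.of_forall fun s ↦ ?_)
  refine ⟨∑ i ∈ s, |i|, ?_⟩
  rw [map_sum]
  refine Submodule.sum_mem _ fun i hi ↦ ?_
  rw [map_smul, mulOp_fourier_fourierLp]
  refine Submodule.smul_mem _ _ (fourierLp_mem_hardySpace ?_)
  have hle : |i| ≤ ∑ i ∈ s, |i| := Finset.single_le_sum (fun _ _ ↦ abs_nonneg _) hi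
  linarith [neg_abs_le i]

theorem norm_iterate_mulOp_le_of_forall_mem_hardySpace (hφ : MemLp φ ∞ haarAddCircle) {K : ℝ≥0}
    {j k : ℕ} (h : ∀ g ∈ hardySpace T, ‖(mulOp hφ)^[j] g‖ ≤ K * ‖(mulOp hφ)^[k] g‖)
    (g : Lp ℂ 2 (haarAddCircle (T := T))) : ‖(mulOp hφ)^[j] g‖ ≤ K * ‖(mulOp hφ)^[k] g‖ := by
  have hcont (n : ℕ) : Continuous fun g : Lp ℂ 2 (haarAddCircle (T := T)) ↦ ‖(mulOp hφ)^[n] g‖ :=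
    ((mulOp hφ).continuous.iterate n).norm
  have hclosed : IsClosed {g : Lp ℂ 2 (haarAddCircle (T := T)) |
      ‖(mulOp hφ)^[j] g‖ ≤ K * ‖(mulOp hφ)^[k] g‖} :=
    isClosed_le (hcont j) ((hcont k).const_mul _)
  refine hclosed.closure_subset_iff.2 ?_
    (dense_setOf_exists_mulOp_fourier_mem_hardySpace (T := T) g)
  rintro g ⟨N, hN⟩
  have hnorm (n : ℕ) : ‖(mulOp hφ)^[n] (mulOp (memLp_top_fourier N) g)‖ = ‖(mulOp hφ)^[n] g‖ := by
    rw [((mulOp_commute hφ (memLp_top_fourier N)).iterate_left n).eq,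
      norm_mulOp_of_norm_eq_one _ (.of_forall (norm_fourier_apply N))]
  simpa only [Set.mem_ofPred_eq, hnorm] using h _ hN

/-- The analytic Toeplitz operator on `H²` with symbol `φ ∈ H^∞`: multiplication by `φ`. -/
noncomputable def analyticToeplitz (hφ : MemLp φ ∞ haarAddCircle)
    (hφH : ∀ n < 0, fourierCoeff φ n = 0) : hardySpace T →L[ℂ] hardySpace T :=
  (mulOp hφ).restrict fun _ ↦ mulOp_mem_hardySpace hφ hφH

theorem coe_iterate_analyticToeplitz (hφ : MemLp φ ∞ haarAddCircle)
    (hφH : ∀ n < 0, fourierCoeff φ n = 0) (k : ℕ) (g : hardySpace T) :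
    ((analyticToeplitz hφ hφH)^[k] g : Lp ℂ 2 haarAddCircle) = (mulOp hφ)^[k] g :=
  (Function.Semiconj.iterate_right (f := Subtype.val) (fun _ ↦ rfl) k).eq g

variable (T) in
/-- The constant function `1` in `H²`. It is the reproducing kernel of evaluation at the origin of
the disc: `⟨1, g⟩` is the zeroth coefficient of `g`. -/
noncomputable def hardyOne : hardySpace T := ⟨fourierLp 2 0, fourierLp_mem_hardySpace le_rfl⟩

theorem hardyOne_ne_zero : hardyOne T ≠ 0 :=
  fun h ↦ orthonormal_fourier.ne_zero 0 (congrArg Subtype.val h)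

theorem inner_hardyOne (g : hardySpace T) : inner ℂ (hardyOne T) g = fourierCoeff g.1 0 :=
  (fourierCoeff_eq_inner_fourierLp g.1 0).symm

theorem inner_hardyOne_analyticToeplitz (hφ : MemLp φ ∞ haarAddCircle)
    (hφH : ∀ n < 0, fourierCoeff φ n = 0) (g : hardySpace T) :
    inner ℂ (hardyOne T) (analyticToeplitz hφ hφH g) =
      fourierCoeff φ 0 * inner ℂ (hardyOne T) g := by
  rw [inner_hardyOne, inner_hardyOne, ← fourierCoeff_mul_of_forall_lt (hφ.mono_exponent le_top)
    (Lp.memLp g.1) hφH (mem_hardySpace_iff.1 g.2), add_zero, ← fourierCoeff_mulOp hφ]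
  rfl

theorem ae_eq_const_of_mulOp_apply_eq_smul (hφ : MemLp φ ∞ haarAddCircle)
    (hφH : ∀ n < 0, fourierCoeff φ n = 0) {l : ℂ} {h : Lp ℂ 2 (haarAddCircle (T := T))}
    (hh : h ∈ hardySpace T) (hl : mulOp hφ h = l • h) (hh₀ : h ≠ 0) :
    φ =ᵐ[haarAddCircle] fun _ ↦ l := by
  have hφ₂ : MemLp φ 2 haarAddCircle := hφ.mono_exponent le_top
  have hφ_mem : hφ₂.toLp ∈ hardySpace T := mem_hardySpace_iff.2 fun n hn ↦ by
    rw [fourierCoeff_congr_ae hφ₂.coeFn_toLp, hφH n hn]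
  let ψ : Lp ℂ 2 (haarAddCircle (T := T)) := hφ₂.toLp - l • fourierLp 2 0
  have hψ_mem : ψ ∈ hardySpace T :=
    sub_mem hφ_mem (Submodule.smul_mem _ l (fourierLp_mem_hardySpace le_rfl))
  have hψ : ψ =ᵐ[haarAddCircle] fun x ↦ φ x - l := by
    filter_upwards [Lp.coeFn_sub hφ₂.toLp (l • fourierLp 2 0), hφ₂.coeFn_toLp,
      Lp.coeFn_smul l (fourierLp (T := T) 2 0), coeFn_fourierLp 2 0] with x hsub hφx hsmul h0
    rw [hsub, Pi.sub_apply, hφx, hsmul, Pi.smul_apply, h0, fourier_zero, smul_eq_mul, mul_one]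
  have hψh : ⇑ψ * ⇑h =ᵐ[haarAddCircle] 0 := by
    have hmul := coeFn_mulOp hφ h
    rw [hl] at hmul
    filter_upwards [hψ, hmul, Lp.coeFn_smul l h] with x hψx hx hlx
    rw [Pi.mul_apply, hψx, sub_mul, ← smul_eq_mul, ← hx, hlx, Pi.smul_apply, smul_eq_mul, sub_self,
      Pi.zero_apply]
  have hψ₀ : ψ = 0 := (eq_zero_or_eq_zero_of_mul_ae_eq_zero hψ_mem hh hψh).resolve_right hh₀
  rw [hψ₀] at hψ
  filter_upwards [hψ, Lp.coeFn_zero ℂ 2 haarAddCircle] with x hx h0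
  exact sub_eq_zero.1 (hx.symm.trans h0)

theorem analyticToeplitz_apply_eq_smul (hφ : MemLp φ ∞ haarAddCircle)
    (hφH : ∀ n < 0, fourierCoeff φ n = 0) {l : ℂ} (hl : φ =ᵐ[haarAddCircle] fun _ ↦ l)
    (g : hardySpace T) : analyticToeplitz hφ hφH g = l • g := by
  refine Subtype.ext (Lp.ext ?_)
  filter_upwards [coeFn_mulOp hφ g.1, Lp.coeFn_smul l g.1, hl] with x hx hlx hφx
  exact hx.trans (by rw [hφx, ← Pi.smul_apply]; exact hlx.symm)

theorem ae_norm_eq_one_of_isFrame_orbit (hφ : MemLp φ ∞ haarAddCircle)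
    (hφH : ∀ n < 0, fourierCoeff φ n = 0) {f : hardySpace T} {A B : ℝ}
    (hv : IsFrame ℂ (fun n ↦ (analyticToeplitz hφ hφH)^[n] f) A B) :
    ∀ᵐ x ∂haarAddCircle, ‖φ x‖ = 1 := by
  have hinj (h : hardySpace T) (hh : analyticToeplitz hφ hφH h = fourierCoeff φ 0 • h) :
      h = 0 := by
    by_contra hne
    have hconst := ae_eq_const_of_mulOp_apply_eq_smul hφ hφH h.2 (congrArg Subtype.val hh)
      (Subtype.coe_ne_coe.2 hne)
    have hrank := hv.rank_le_one_of_orbit_of_apply_eq_smul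
      (analyticToeplitz_apply_eq_smul hφ hφH hconst f)
    exact (Cardinal.one_lt_aleph0.trans_le (aleph0_le_rank_hardySpace T)).not_ge hrank
  obtain ⟨K, hK⟩ := hv.exists_norm_iterate_le_of_orbit hardyOne_ne_zero
    (inner_hardyOne_analyticToeplitz hφ hφH) hinj
  refine ae_norm_eq_one_of_forall_norm_iterate_mulOp_le (p := 2) (by simp) hφ (K := K) fun j k ↦
    norm_iterate_mulOp_le_of_forall_mem_hardySpace hφ fun g hg ↦ ?_
  have := hK j k ⟨g, hg⟩
  rwa [Submodule.coe_norm, Submodule.coe_norm, coe_iterate_analyticToeplitz,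
    coe_iterate_analyticToeplitz] at this

theorem inner_iterate_analyticToeplitz (hφ : MemLp φ ∞ haarAddCircle)
    (hφH : ∀ n < 0, fourierCoeff φ n = 0) (f g : hardySpace T) (n : ℕ) :
    inner ℂ ((analyticToeplitz hφ hφH)^[n] f) g =
      ∫ x, g.1 x * conj (φ x ^ n * f.1 x) ∂haarAddCircle := by
  rw [Submodule.coe_inner, coe_iterate_analyticToeplitz, L2.inner_def]
  refine integral_congr_ae ?_
  filter_upwards [coeFn_iterate_mulOp hφ f.1 n] with x hx
  rw [hx, smul_eq_mul, RCLike.inner_apply]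

end HardySpace

theorem stmt11_general {T : ℝ} [Fact (0 < T)] {φ : AddCircle T → ℂ}
    (hφ : MemLp φ ∞ AddCircle.haarAddCircle) (hφH : ∀ n : ℤ, n < 0 → fourierCoeff φ n = 0)
    {f : Lp ℂ 2 (AddCircle.haarAddCircle (T := T))}
    (hf : ∀ n : ℤ, n < 0 → fourierCoeff f n = 0) {A B : ℝ} (hA : 0 < A)
    (hframe : ∀ g : Lp ℂ 2 (AddCircle.haarAddCircle (T := T)),
      (∀ n : ℤ, n < 0 → fourierCoeff g n = 0) →
      A * ‖g‖ ^ 2 ≤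
          ∑' n : ℕ, ‖∫ x, g x * conj (φ x ^ n * f x) ∂AddCircle.haarAddCircle‖ ^ 2 ∧
        ∑' n : ℕ, ‖∫ x, g x * conj (φ x ^ n * f x) ∂AddCircle.haarAddCircle‖ ^ 2 ≤
          B * ‖g‖ ^ 2) :
    ∀ᵐ x ∂AddCircle.haarAddCircle, ‖φ x‖ = 1 := by
  lift f to hardySpace T using mem_hardySpace_iff.2 hf
  have hv : IsFrame ℂ (fun n ↦ (analyticToeplitz hφ hφH)^[n] f) A B :=
    isFrame_of_tsum_bounds hA fun g ↦ by
      simpa only [inner_iterate_analyticToeplitz, Submodule.coe_norm] using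
        hframe g (mem_hardySpace_iff.1 g.2)
  exact ae_norm_eq_one_of_isFrame_orbit hφ hφH hv

theorem stmt11 (φ : AddCircle (2 * Real.pi) → ℂ) (hφmeas : Measurable φ)
    (hφbdd : ∃ C : ℝ, ∀ x, ‖φ x‖ ≤ C)
    (hφH : ∀ n : ℤ, n < 0 → fourierCoeff φ n = 0)
    (f : Lp ℂ 2 μC)
    (hf : ∀ n : ℤ, n < 0 → fourierCoeff (f : AddCircle (2 * Real.pi) → ℂ) n = 0)
    (A B : ℝ) (hA : 0 < A) (hB : 0 < B)
    (hframe : ∀ g : Lp ℂ 2 μC,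
      (∀ n : ℤ, n < 0 → fourierCoeff (g : AddCircle (2 * Real.pi) → ℂ) n = 0) →
      A * ‖g‖ ^ 2 ≤ ∑' n : ℕ,
          ‖∫ x, (g : AddCircle (2 * Real.pi) → ℂ) x *
            conj (φ x ^ n * (f : AddCircle (2 * Real.pi) → ℂ) x) ∂μC‖ ^ 2 ∧
        ∑' n : ℕ,
          ‖∫ x, (g : AddCircle (2 * Real.pi) → ℂ) x *
            conj (φ x ^ n * (f : AddCircle (2 * Real.pi) → ℂ) x) ∂μC‖ ^ 2 ≤ B * ‖g‖ ^ 2) :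
    ∀ᵐ x ∂μC, ‖φ x‖ = 1 := by
  obtain ⟨C, hC⟩ := hφbdd
  have hφ : MemLp φ ∞ μC := memLp_top_of_bound hφmeas.aestronglyMeasurable C (.of_forall hC)
  exact stmt11_general hφ hφH hf hA hframe
end
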